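/- For every integer k ≥ 2 and all reals x_1, x_2 ≥ 0 with x_1 + x_2 ≤ 1, one has D_k(x_1, x_2) ≤ D_{k+1}(x_1, x_2), where D_k(x_1, x_2) denotes the supremum of d_k(x_1, x_2, x_3, …, x_k) over all (x_3, …, x_k) such that (x_1, x_2, x_3, …, x_k) lies in the standard simplex Δ_k. -/

import Mathlib

/-- The cumulative distribution function `F(z) = min((11/6)z, 1)` of the ICUT scheme. -/
noncomputable def Fcdf (z : ℝ) : ℝ := min ((11 / 6) * z) 1

/-- The probability density `F′(z)`: `11/6` for `z < 6/11` and `0` for `z ≥ 6/11`. -/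
noncomputable def Fpdf (z : ℝ) : ℝ := if z < 6 / 11 then 11 / 6 else 0

/-- The density `d_k(x)` with which ICUT cuts an infinitesimal `1,2`-aligned segment at
`x = (x_1, …, x_k)`:
`d_k(x) = (1/k!) ∑_σ [ F′(x_1) ∏_{i : σ(i) < σ(1)} (1 − F(x_i))
                      + F′(x_2) ∏_{i : σ(i) < σ(2)} (1 − F(x_i)) ]`. -/
noncomputable def dDensity (k : ℕ) (hk : 2 ≤ k) (x : Fin k → ℝ) : ℝ :=
  ((Nat.factorial k : ℝ))⁻¹ *
    ∑ σ : Equiv.Perm (Fin k),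
      (Fpdf (x ⟨0, by omega⟩) *
          ∏ i ∈ Finset.univ.filter (fun i => σ i < σ ⟨0, by omega⟩), (1 - Fcdf (x i)) +
        Fpdf (x ⟨1, by omega⟩) *
          ∏ i ∈ Finset.univ.filter (fun i => σ i < σ ⟨1, by omega⟩), (1 - Fcdf (x i)))

/-- `C_k(x_1, x_2) = d_k(x_1, x_2, c, …, c)` where `c = (1 − x_1 − x_2)/(k − 2)`. -/
noncomputable def Cdensity (k : ℕ) (hk : 3 ≤ k) (x1 x2 : ℝ) : ℝ :=
  dDensity k (by omega)
    (fun i => if (i : ℕ) = 0 then x1 else if (i : ℕ) = 1 then x2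
      else (1 - x1 - x2) / ((k : ℝ) - 2))

noncomputable def permE (k : ℕ) (q : Fin (k+1) × Equiv.Perm (Fin k)) : Equiv.Perm (Fin (k+1)) :=
  (finSuccEquiv' (Fin.last k)).trans ((Equiv.optionCongr q.2).trans (finSuccEquiv' q.1).symm)

lemma permE_last (k : ℕ) (q) : permE k q (Fin.last k) = q.1 := by
  simp [permE]

lemma permE_castSucc (k : ℕ) (q) (i : Fin k) :
    permE k q i.castSucc = q.1.succAbove (q.2 i) := by
  have h : finSuccEquiv' (Fin.last k) i.castSucc = some i := by
    rw [← Fin.succAbove_last_apply, finSuccEquiv'_succAbove]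
  simp [permE, h]

lemma permE_bij (k : ℕ) : Function.Bijective (permE k) := by
  rw [Fintype.bijective_iff_injective_and_card]
  constructor
  · rintro ⟨p, s⟩ ⟨q, t⟩ h
    have h1 : p = q := by
      have := congrArg (fun e => e (Fin.last k)) h
      simpa [permE_last] using this
    subst h1
    have h2 : s = t := by
      ext i
      have := congrArg (fun e => e i.castSucc) h
      simp only [permE_castSucc] at this
      rw [Fin.succAbove_right_injective this]
    rw [h2]
  · simp [Fintype.card_perm, Nat.factorial_succ]

lemma prod_permE (k : ℕ) (q) (a : Fin k) (w : Fin (k+1) → ℝ) (hw : w (Fin.last k) = 1) :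
    ∏ i ∈ Finset.univ.filter (fun i => permE k q i < permE k q a.castSucc), w i =
    ∏ i ∈ Finset.univ.filter (fun i => q.2 i < q.2 a), w i.castSucc := by
  rw [Finset.prod_filter, Finset.prod_filter, Fin.prod_univ_castSucc, hw]
  simp [permE_castSucc, Fin.succAbove_lt_succAbove_iff]

lemma dDensity_snoc (k : ℕ) (hk : 2 ≤ k) (hk1 : 2 ≤ k + 1) (y : Fin k → ℝ) :
    dDensity (k+1) hk1 (Fin.snoc y 0) = dDensity k hk y := by
  unfold dDensity
  rw [← (permE_bij k).sum_comp, Fintype.sum_prod_type]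
  set Y : Fin (k+1) → ℝ := Fin.snoc y 0 with hY
  have hc : ∀ i : Fin k, Y i.castSucc = y i := fun i => by simp [hY]
  have hw : (fun i => 1 - Fcdf (Y i)) (Fin.last k) = 1 := by simp [hY, Fcdf]
  have e0 : (⟨0, by omega⟩ : Fin (k+1)) = (⟨0, by omega⟩ : Fin k).castSucc := rfl
  have e1 : (⟨1, by omega⟩ : Fin (k+1)) = (⟨1, by omega⟩ : Fin k).castSucc := rfl
  rw [e0, e1]
  have key : ∀ (p : Fin (k+1)) (t : Equiv.Perm (Fin k)) (a : Fin k), _ :=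
    fun p t a => prod_permE k (p, t) a (fun i => 1 - Fcdf (Y i)) hw
  simp only [key, hc]
  rw [Finset.sum_const, Finset.card_univ, Fintype.card_fin, nsmul_eq_mul, Nat.factorial_succ]
  have : (k.factorial : ℝ) ≠ 0 := by positivity
  have : ((k+1 : ℕ) : ℝ) ≠ 0 := by positivity
  rw [← mul_assoc]
  congr 1
  push_cast at *
  field_simp

lemma w_bd {z : ℝ} (hz : 0 ≤ z) : 0 ≤ 1 - Fcdf z ∧ 1 - Fcdf z ≤ 1 := by
  unfold Fcdf
  constructor
  · linarith [min_le_right ((11/6) * z) 1]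
  · have : 0 ≤ min ((11/6) * z) 1 := le_min (by positivity) zero_le_one
    linarith

lemma pdf_bd (z : ℝ) : 0 ≤ Fpdf z ∧ Fpdf z ≤ 11/6 := by
  unfold Fpdf; split_ifs <;> norm_num

lemma term_bd {k : ℕ} (x : Fin k → ℝ) (hx : ∀ i, 0 ≤ x i) (z : ℝ) (s : Finset (Fin k)) :
    0 ≤ Fpdf z * ∏ i ∈ s, (1 - Fcdf (x i)) ∧ Fpdf z * ∏ i ∈ s, (1 - Fcdf (x i)) ≤ 11/6 := by
  have h0 : 0 ≤ ∏ i ∈ s, (1 - Fcdf (x i)) := Finset.prod_nonneg fun i _ => (w_bd (hx i)).1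
  have h1 : ∏ i ∈ s, (1 - Fcdf (x i)) ≤ 1 :=
    Finset.prod_le_one (fun i _ => (w_bd (hx i)).1) fun i _ => (w_bd (hx i)).2
  obtain ⟨a, b⟩ := pdf_bd z
  exact ⟨mul_nonneg a h0, by nlinarith⟩

lemma dDensity_bd (k : ℕ) (hk : 2 ≤ k) (x : Fin k → ℝ) (hx : ∀ i, 0 ≤ x i) :
    0 ≤ dDensity k hk x ∧ dDensity k hk x ≤ 11/3 := by
  unfold dDensity
  constructor
  · exact mul_nonneg (by positivity) (Finset.sum_nonneg fun σ _ =>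
      add_nonneg (term_bd x hx _ _).1 (term_bd x hx _ _).1)
  · have hp : (0:ℝ) < k.factorial := by positivity
    rw [inv_mul_le_iff₀ hp]
    refine (Finset.sum_le_card_nsmul _ _ (11/3) fun σ _ => ?_).trans ?_
    · linarith [(term_bd x hx (x ⟨0, by omega⟩)
        (Finset.univ.filter (fun i => σ i < σ ⟨0, by omega⟩))).2,
        (term_bd x hx (x ⟨1, by omega⟩)
        (Finset.univ.filter (fun i => σ i < σ ⟨1, by omega⟩))).2]
    · simp [Fintype.card_perm]

/-- `D_k(x_1, x_2) ≤ D_{k+1}(x_1, x_2)`, where `D_k(x_1, x_2)` is the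
supremum of `d_k(x)` over points `x` of the standard simplex whose first two
coordinates are `x_1` and `x_2`. -/
theorem Dsup_mono (k : ℕ) (hk : 2 ≤ k) (x1 x2 : ℝ) (h1 : 0 ≤ x1) (h2 : 0 ≤ x2)
    (h12 : x1 + x2 ≤ 1) :
    sSup {d : ℝ | ∃ y : Fin k → ℝ, y ∈ stdSimplex ℝ (Fin k) ∧
        y ⟨0, by omega⟩ = x1 ∧ y ⟨1, by omega⟩ = x2 ∧ d = dDensity k hk y} ≤
    sSup {d : ℝ | ∃ y : Fin (k + 1) → ℝ, y ∈ stdSimplex ℝ (Fin (k + 1)) ∧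
        y ⟨0, by omega⟩ = x1 ∧ y ⟨1, by omega⟩ = x2 ∧ d = dDensity (k + 1) (by omega) y} := by
  have hnn : ∀ d ∈ {d : ℝ | ∃ y : Fin (k + 1) → ℝ, y ∈ stdSimplex ℝ (Fin (k + 1)) ∧
        y ⟨0, by omega⟩ = x1 ∧ y ⟨1, by omega⟩ = x2 ∧ d = dDensity (k + 1) (by omega) y},
        0 ≤ d := by
    rintro d ⟨y, hy, -, -, rfl⟩
    exact (dDensity_bd _ _ y hy.1).1
  refine Real.sSup_le ?_ (Real.sSup_nonneg hnn)
  rintro d ⟨y, hy, hy0, hy1, rfl⟩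
  refine le_csSup ⟨11/3, ?_⟩ ⟨Fin.snoc y 0, ⟨?_, ?_⟩, ?_, ?_, (dDensity_snoc k hk _ y).symm⟩
  · rintro d ⟨y, hy, -, -, rfl⟩
    exact (dDensity_bd _ _ y hy.1).2
  · intro i
    refine Fin.lastCases ?_ (fun j => ?_) i
    · simp
    · simpa using hy.1 j
  · rw [Fin.sum_univ_castSucc]
    simpa using hy.2
  · rw [← hy0]
    exact Fin.snoc_castSucc (α := fun _ => ℝ) 0 y ⟨0, by omega⟩
  · rw [← hy1]
    exact Fin.snoc_castSucc (α := fun _ => ℝ) 0 y ⟨1, by omega⟩
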